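/- arXiv:quant-ph/9905042 — 2 statements merged into one kernel-verified Lean document; each statement's English description precedes it below -/
import Mathlib

section
/- Let A, B be canonically conjugate self-adjoint operators satisfying the Weyl relations, E the spectral measure of B, and ρ a state of B(H) that is dispersion-free on W*(A) and well-defined for A. Then ρ(E(C)) = 0 for every compact interval C ⊆ ℝ. Consequently there is no state for which A and B have joint beable status. -/
open scoped ComplexOrder

/-- A function `f : ℝ → ℂ` is bounded and Borel measurable. -/
def BddMeas (f : ℝ → ℂ) : Prop :=
  Measurable f ∧ ∃ M : ℝ, ∀ x : ℝ, ‖f x‖ ≤ M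

/-- `Φ` is a unital *-homomorphism from the bounded Borel functions on ℝ into B(H),
contractive with respect to the sup norm (the bounded Borel functional calculus of a
self-adjoint operator). -/
structure IsBddBorelHom {H : Type*} [NormedAddCommGroup H] [InnerProductSpace ℂ H]
    [CompleteSpace H] (Φ : (ℝ → ℂ) → (H →L[ℂ] H)) : Prop where
  map_one : Φ (fun _ => 1) = 1
  map_add : ∀ f g, BddMeas f → BddMeas g → Φ (f + g) = Φ f + Φ g
  map_smul : ∀ (c : ℂ) f, BddMeas f → Φ (c • f) = c • Φ f
  map_mul : ∀ f g, BddMeas f → BddMeas g → Φ (f * g) = Φ f * Φ g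
  map_star : ∀ f, BddMeas f → Φ (fun x => starRingEnd ℂ (f x)) = star (Φ f)
  norm_le : ∀ f (M : ℝ), BddMeas f → (∀ x, ‖f x‖ ≤ M) → ‖Φ f‖ ≤ M

theorem BddMeas.add {f g : ℝ → ℂ} (hf : BddMeas f) (hg : BddMeas g) : BddMeas (f + g) := by
  obtain ⟨hfm, M, hM⟩ := hf
  obtain ⟨hgm, K, hK⟩ := hg
  exact ⟨hfm.add hgm, M + K, fun x => (norm_add_le _ _).trans (add_le_add (hM x) (hK x))⟩

theorem BddMeas.smul (c : ℂ) {f : ℝ → ℂ} (hf : BddMeas f) : BddMeas (c • f) := by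
  obtain ⟨hfm, M, hM⟩ := hf
  refine ⟨hfm.const_smul c, ‖c‖ * M, fun x => ?_⟩
  rw [Pi.smul_apply, norm_smul]
  exact mul_le_mul_of_nonneg_left (hM x) (norm_nonneg c)

theorem BddMeas.sum {ι : Type*} (F : Finset ι) {f : ι → ℝ → ℂ} (hf : ∀ i, BddMeas (f i)) :
    BddMeas (∑ i ∈ F, f i) := by
  classical
  induction F using Finset.induction_on with
  | empty => exact ⟨measurable_const, 0, fun x => by simp⟩
  | insert i F hi ih => rw [Finset.sum_insert hi]; exact (hf i).add ih

theorem bddMeas_exp (t : ℝ) : BddMeas (fun x : ℝ => Complex.exp (t * x * Complex.I)) := by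
  refine ⟨by fun_prop, 1, fun x => ?_⟩
  simpa using (Complex.norm_exp_ofReal_mul_I (t * x)).le

theorem bddMeas_indicator_Icc (a b : ℝ) :
    BddMeas (Set.indicator (Set.Icc a b) (fun _ => (1 : ℂ))) := by
  refine ⟨measurable_const.indicator measurableSet_Icc, 1, fun x => ?_⟩
  by_cases hx : x ∈ Set.Icc a b <;> simp [hx]

section PositiveFunctional

variable {R : Type*} [Ring R] [StarRing R] [Algebra ℂ R] [StarModule ℂ R]

theorem map_star_mul_eq_conj (ρ : R →ₗ[ℂ] ℂ) (hpos : ∀ T, 0 ≤ ρ (star T * T)) (S T : R) :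
    ρ (star T * S) = starRingEnd ℂ (ρ (star S * T)) := by
  have key : ∀ c : ℂ, (c * ρ (star S * T) + starRingEnd ℂ c * ρ (star T * S)).im = 0 := by
    intro c
    have h := (Complex.nonneg_iff.1 (hpos (S + c • T))).2
    have hS := (Complex.nonneg_iff.1 (hpos S)).2
    have hT := (Complex.nonneg_iff.1 (hpos (c • T))).2
    simp only [star_add, add_mul, mul_add, map_add, star_smul, smul_mul_assoc, mul_smul_comm,
      map_smul, smul_eq_mul, Complex.add_im, Complex.star_def] at h hT ⊢
    linarith
  have h1 := key 1
  have h2 := key Complex.I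
  simp at h1 h2
  apply Complex.ext <;> simp <;> linarith

theorem map_star_mul_eq_zero (ρ : R →ₗ[ℂ] ℂ) (hpos : ∀ T, 0 ≤ ρ (star T * T)) (S : R) {T : R}
    (hT : ρ (star T * T) = 0) : ρ (star S * T) = 0 := by
  have hconj := map_star_mul_eq_conj ρ hpos S T
  set x := ρ (star S * T) with hx
  have key : ∀ r : ℝ, 0 ≤ (ρ (star S * S)).re - 2 * r * Complex.normSq x := by
    intro r
    have h := (Complex.nonneg_iff.1 (hpos (S + (-(r : ℂ) * starRingEnd ℂ x) • T))).1
    simp only [star_add, add_mul, mul_add, map_add, star_smul, smul_mul_assoc, mul_smul_comm,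
      map_smul, smul_eq_mul, Complex.star_def, hT, hconj, ← hx] at h
    simp [Complex.normSq_apply] at h ⊢
    linarith
  by_contra hne
  have hp : 0 < Complex.normSq x := Complex.normSq_pos.2 hne
  have h := key (((ρ (star S * S)).re + 1) / (2 * Complex.normSq x))
  have : 2 * (((ρ (star S * S)).re + 1) / (2 * Complex.normSq x)) * Complex.normSq x
      = (ρ (star S * S)).re + 1 := by field_simp
  linarith

/-- A state which has modulus one on a unitary `u` is multiplicative at `u`, on both sides. -/
theorem map_mul_of_unitary (ρ : R →ₗ[ℂ] ℂ) (hpos : ∀ T, 0 ≤ ρ (star T * T)) (hone : ρ 1 = 1)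
    {u : R} (hu : u ∈ unitary R) (hmod : ρ u * ρ (star u) = 1) (T : R) :
    ρ (T * u) = ρ T * ρ u ∧ ρ (u * T) = ρ u * ρ T := by
  have hstar : ρ (star u) = starRingEnd ℂ (ρ u) := by
    simpa using map_star_mul_eq_conj ρ hpos 1 u
  have h1 : ρ (star (u - ρ u • (1 : R)) * (u - ρ u • (1 : R))) = 0 := by
    simp only [star_sub, star_smul, star_one, sub_mul, mul_sub, smul_mul_assoc, mul_smul_comm,
      one_mul, mul_one, map_sub, map_smul, smul_eq_mul, Unitary.star_mul_self_of_mem hu, hone,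
      Complex.star_def, ← hstar]
    linear_combination -hmod
  have h2 : ρ (star (star (u - ρ u • (1 : R))) * star (u - ρ u • (1 : R))) = 0 := by
    simp only [star_star, star_sub, star_smul, star_one, sub_mul, mul_sub, smul_mul_assoc,
      mul_smul_comm, one_mul, mul_one, map_sub, map_smul, smul_eq_mul,
      Unitary.mul_star_self_of_mem hu, hone, Complex.star_def, ← hstar]
    linear_combination -hmod
  have h3 := map_star_mul_eq_zero ρ hpos (star T) h1
  have h4 := map_star_mul_eq_conj ρ hpos T (star (u - ρ u • (1 : R)))
  rw [map_star_mul_eq_zero ρ hpos T h2] at h4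
  simp only [star_star, mul_sub, sub_mul, mul_smul_comm, smul_mul_assoc, mul_one, one_mul,
    map_sub, map_smul, smul_eq_mul, map_zero] at h3 h4
  exact ⟨by linear_combination h3, by linear_combination h4⟩

end PositiveFunctional

section FunctionalCalculus

variable {H : Type*} [NormedAddCommGroup H] [InnerProductSpace ℂ H] [CompleteSpace H]
  {Φ : (ℝ → ℂ) → (H →L[ℂ] H)}

theorem IsBddBorelHom.map_sum (hΦ : IsBddBorelHom Φ) {ι : Type*} (F : Finset ι) {f : ι → ℝ → ℂ}
    (hf : ∀ i, BddMeas (f i)) : Φ (∑ i ∈ F, f i) = ∑ i ∈ F, Φ (f i) := by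
  classical
  induction F using Finset.induction_on with
  | empty =>
    have h := hΦ.map_smul 0 0 ⟨measurable_const, 0, fun x => by simp⟩
    simpa using h
  | insert i F hi ih =>
    rw [Finset.sum_insert hi, Finset.sum_insert hi, hΦ.map_add _ _ (hf i) (.sum F hf), ih]

theorem IsBddBorelHom.map_nonneg (hΦ : IsBddBorelHom Φ) {ρ : (H →L[ℂ] H) →ₗ[ℂ] ℂ}
    (hpos : ∀ T : H →L[ℂ] H, 0 ≤ ρ (star T * T)) {f : ℝ → ℂ} (hf : BddMeas f)
    (h0 : ∀ x, 0 ≤ f x) : 0 ≤ ρ (Φ f) := by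
  obtain ⟨hfm, M, hM⟩ := hf
  have hg : BddMeas (fun x => ((Real.sqrt (f x).re : ℝ) : ℂ)) := by
    refine ⟨by fun_prop, Real.sqrt M, fun x => ?_⟩
    rw [Complex.norm_real, Real.norm_of_nonneg (Real.sqrt_nonneg _)]
    exact Real.sqrt_le_sqrt ((Complex.re_le_norm _).trans (hM x))
  have hstar := hΦ.map_star _ hg
  simp only [Complex.conj_ofReal] at hstar
  have hsq : f = (fun x => ((Real.sqrt (f x).re : ℝ) : ℂ)) *
      (fun x => ((Real.sqrt (f x).re : ℝ) : ℂ)) := by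
    funext x
    obtain ⟨hre, him⟩ := Complex.nonneg_iff.1 (h0 x)
    rw [Pi.mul_apply, ← Complex.ofReal_mul, Real.mul_self_sqrt hre]
    apply Complex.ext <;> simp [← him]
  rw [hsq, hΦ.map_mul _ _ hg hg]
  nth_rewrite 1 [hstar]
  exact hpos _

end FunctionalCalculus

/-- The squared modulus of a geometric exponential sum, expanded. -/
theorem sum_exp_sub_eq_normSq (N : ℕ) (t x : ℝ) :
    ∑ p ∈ Finset.range N ×ˢ Finset.range N,
        Complex.exp ((((p.1 : ℝ) - p.2) * t : ℝ) * x * Complex.I) =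
      (Complex.normSq (∑ k ∈ Finset.range N, Complex.exp ((k * t * x : ℝ) * Complex.I)) : ℂ) := by
  rw [← Complex.mul_conj, _root_.map_sum, Finset.sum_mul_sum, Finset.sum_product]
  refine Finset.sum_congr rfl fun j _ => Finset.sum_congr rfl fun k _ => ?_
  rw [← Complex.exp_conj, ← Complex.exp_add]
  congr 1
  simp
  ring

theorem sq_le_four_mul_normSq_sum_exp (N : ℕ) (t x : ℝ) (h : N * |t * x| ≤ 1) :
    (N : ℝ) ^ 2 ≤
      4 * Complex.normSq (∑ k ∈ Finset.range N, Complex.exp ((k * t * x : ℝ) * Complex.I)) := by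
  set s := ∑ k ∈ Finset.range N, Complex.exp ((k * t * x : ℝ) * Complex.I) with hs
  have hre : (N : ℝ) / 2 ≤ s.re := by
    rw [hs, Complex.re_sum]
    have hterm : ∀ k ∈ Finset.range N,
        (1 / 2 : ℝ) ≤ (Complex.exp ((k * t * x : ℝ) * Complex.I)).re := by
      intro k hk
      rw [Complex.exp_ofReal_mul_I_re]
      have hk' : (k : ℝ) ≤ N := by exact_mod_cast (Finset.mem_range.1 hk).le
      have habs : |k * t * x| ≤ 1 := by
        rw [mul_assoc, abs_mul, Nat.abs_cast]
        exact (mul_le_mul_of_nonneg_right hk' (abs_nonneg _)).trans h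
      have hsq : (k * t * x) ^ 2 ≤ 1 := (sq_le_one_iff_abs_le_one _).2 habs
      have := Real.one_sub_sq_div_two_le_cos (x := k * t * x)
      linarith
    have := Finset.card_nsmul_le_sum _ _ _ hterm
    simp only [Finset.card_range, nsmul_eq_mul] at this
    linarith
  rw [Complex.normSq_apply]
  nlinarith [mul_self_nonneg s.im, (Nat.cast_nonneg N : (0 : ℝ) ≤ N)]

/-- Let A, B be canonically conjugate self-adjoint operators (Weyl relation
e^{isA}e^{itB} = e^{±ist}e^{itB}e^{isA}), with E the spectral measure of B
(realized via the bounded Borel functional calculus Φ of B, so that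
E(C) = Φ(χ_C) and Φ(e^{itx}) = e^{itB}).  If ρ is a state of B(H) that is
dispersion-free on W*(A), then ρ(E(C)) = 0 for every compact interval C ⊆ ℝ. -/
theorem stmt_17 {H : Type*} [NormedAddCommGroup H] [InnerProductSpace ℂ H] [CompleteSpace H]
    (U W : ℝ → (H →L[ℂ] H))
    (hUu : ∀ s, U s ∈ unitary (H →L[ℂ] H)) (hWu : ∀ t, W t ∈ unitary (H →L[ℂ] H))
    (hU0 : U 0 = 1) (hUadd : ∀ s t, U (s + t) = U s * U t)
    (hUstar : ∀ s, star (U s) = U (-s))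
    (ε : ℝ) (hε : ε = 1 ∨ ε = -1)
    (hWeyl : ∀ s t, U s * W t = Complex.exp (ε * s * t * Complex.I) • (W t * U s))
    (Φ : (ℝ → ℂ) → (H →L[ℂ] H)) (hΦ : IsBddBorelHom Φ)
    (hΦW : ∀ t : ℝ, Φ (fun x => Complex.exp (t * x * Complex.I)) = W t)
    (ρ : (H →L[ℂ] H) →ₗ[ℂ] ℂ)
    (hpos : ∀ T : H →L[ℂ] H, 0 ≤ ρ (star T * T)) (hone : ρ 1 = 1)
    (hmult : ∀ s t, ρ (U s * U t) = ρ (U s) * ρ (U t)) :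
    ∀ a b : ℝ, ρ (Φ (Set.indicator (Set.Icc a b) (fun _ => (1 : ℂ)))) = 0 := by
  intro a b
  have hW : ∀ t : ℝ, t ≠ 0 → ρ (W t) = 0 := by
    intro t ht
    have hmod : ρ (U (Real.pi / t)) * ρ (star (U (Real.pi / t))) = 1 := by
      rw [hUstar, ← hmult, ← hUadd, add_neg_cancel, hU0, hone]
    obtain ⟨hr, hl⟩ := map_mul_of_unitary ρ hpos hone (hUu _) hmod (W t)
    have hexp : Complex.exp (ε * (Real.pi / t : ℝ) * t * Complex.I) = -1 := by
      have hc : (t : ℂ) ≠ 0 := by exact_mod_cast ht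
      have harg : (ε : ℂ) * (Real.pi / t : ℝ) * t * Complex.I = ε * (Real.pi * Complex.I) := by
        push_cast
        field_simp
      rw [harg]
      rcases hε with rfl | rfl <;> simp [Complex.exp_neg]
    have h := congrArg ρ (hWeyl (Real.pi / t) t)
    rw [hexp, map_smul, hr, hl, smul_eq_mul] at h
    have hne : ρ (U (Real.pi / t)) ≠ 0 := left_ne_zero_of_mul_eq_one hmod
    refine (mul_eq_zero.1 (?_ : ρ (U (Real.pi / t)) * ρ (W t) = 0)).resolve_left hne
    linear_combination h / 2
  have hW0 : W 0 = 1 := by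
    rw [← hΦW, ← hΦ.map_one]
    simp
  set χ : ℝ → ℂ := Set.indicator (Set.Icc a b) (fun _ => (1 : ℂ)) with hχ
  have hχb : BddMeas χ := bddMeas_indicator_Icc a b
  have hχ0 : 0 ≤ ρ (Φ χ) := hΦ.map_nonneg hpos hχb fun x => by
    by_cases hx : x ∈ Set.Icc a b <;> simp [hχ, hx]
  obtain ⟨hre, him⟩ := Complex.nonneg_iff.1 hχ0
  have hbound : ∀ N : ℕ, 0 < N → N * (ρ (Φ χ)).re ≤ 4 := by
    intro N hN
    have hN' : (0 : ℝ) < N := by exact_mod_cast hN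
    set t : ℝ := 1 / (N * (|a| + |b| + 1)) with ht
    have ht0 : 0 < t := by positivity
    let e : ℕ × ℕ → ℝ → ℂ := fun p x =>
      Complex.exp ((((p.1 : ℝ) - p.2) * t : ℝ) * x * Complex.I)
    have he : ∀ p, BddMeas (e p) := fun p => bddMeas_exp _
    have hsum : ρ (Φ (∑ p ∈ Finset.range N ×ˢ Finset.range N, e p)) = N := by
      have hterm : ∀ j k : ℕ, ρ (Φ (e (j, k))) = if j = k then 1 else 0 := by
        intro j k
        rw [hΦW]
        split_ifs with hjk
        · simp [hjk, hW0, hone]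
        · refine hW _ (mul_ne_zero (sub_ne_zero.2 ?_) ht0.ne')
          exact_mod_cast hjk
      rw [hΦ.map_sum _ he, _root_.map_sum, Finset.sum_product]
      calc ∑ j ∈ Finset.range N, ∑ k ∈ Finset.range N, ρ (Φ (e (j, k)))
          = ∑ j ∈ Finset.range N, (1 : ℂ) := Finset.sum_congr rfl fun j hj => by
            simp only [hterm, Finset.sum_ite_eq, if_pos hj]
        _ = N := by simp
    have hFb : BddMeas ((4 : ℂ) • ∑ p ∈ Finset.range N ×ˢ Finset.range N, e p) :=
      (BddMeas.sum _ he).smul 4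
    have hGb : BddMeas ((-(N : ℂ) ^ 2) • χ) := hχb.smul _
    have hnonneg := hΦ.map_nonneg hpos (hFb.add hGb) fun x => by
      rw [Pi.add_apply, Pi.smul_apply, Pi.smul_apply, Finset.sum_apply,
        sum_exp_sub_eq_normSq N t x, smul_eq_mul, smul_eq_mul]
      by_cases hx : x ∈ Set.Icc a b
      · have hxab : |x| ≤ |a| + |b| + 1 := by
          rw [abs_le]
          constructor <;>
            linarith [hx.1, hx.2, neg_abs_le a, le_abs_self b, abs_nonneg a, abs_nonneg b]
        have hsmall : N * |t * x| ≤ 1 := by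
          rw [abs_mul, abs_of_pos ht0, ht]
          calc (N : ℝ) * (1 / (N * (|a| + |b| + 1)) * |x|) = |x| / (|a| + |b| + 1) := by
                field_simp
            _ ≤ 1 := (div_le_one (by positivity)).2 hxab
        have hle := sq_le_four_mul_normSq_sum_exp N t x hsmall
        simp only [hχ, Set.indicator_of_mem hx, mul_one]
        rw [← sub_eq_add_neg, sub_nonneg]
        exact_mod_cast hle
      · simp only [hχ, Set.indicator_of_notMem hx, mul_zero, add_zero]
        exact mul_nonneg (by norm_num) (Complex.zero_le_real.2 (Complex.normSq_nonneg _))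
    rw [hΦ.map_add _ _ hFb hGb, hΦ.map_smul _ _ (.sum _ he), hΦ.map_smul _ _ hχb, map_add,
      map_smul, map_smul, hsum] at hnonneg
    have hre' := (Complex.nonneg_iff.1 hnonneg).1
    have hcast : (-(N : ℂ) ^ 2) = ((-(N : ℝ) ^ 2 : ℝ) : ℂ) := by push_cast; ring
    rw [hcast, smul_eq_mul, smul_eq_mul, Complex.add_re, Complex.re_ofReal_mul] at hre'
    simp at hre'
    nlinarith
  refine Complex.ext (le_antisymm ?_ hre) him.symm
  by_contra! hlt
  obtain ⟨N, hN⟩ := exists_nat_gt (4 / (ρ (Φ χ)).re)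
  have hNpos : (0 : ℝ) < N := (div_pos four_pos hlt).trans hN
  exact absurd (hbound N (by exact_mod_cast hNpos)) (not_le.2 ((div_lt_iff₀ hlt).1 hN))
end

section
/- Let R be a commuting family of self-adjoint operators in B(H), v a unit vector, S = [R''v] the closed span of {Av : A ∈ R''}. If A is self-adjoint, commutes with every element of R, and Av ∈ S, then A ∈ B(S^⊥) ⊕ (R'' P_S); if A does not leave S invariant, then A ∉ B(S^⊥) ⊕ (R'' P_S). -/
/-- `S = [R''v]`: the closed linear span of the orbit of v under the double commutant
R'' of the family R. -/
noncomputable def beableSpan {H : Type*} [NormedAddCommGroup H] [InnerProductSpace ℂ H]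
    (R : Set (H →L[ℂ] H)) (v : H) : Submodule ℂ H :=
  (Submodule.span ℂ
    ((fun T : H →L[ℂ] H => T v) '' Set.centralizer (Set.centralizer R))).topologicalClosure

/-- The algebra `B(S^⊥) ⊕ R''P_S`: operators A such that S = [R''v] reduces A and A
agrees on S with some element of R''. -/
noncomputable def BRv {H : Type*} [NormedAddCommGroup H] [InnerProductSpace ℂ H]
    [CompleteSpace H] (R : Set (H →L[ℂ] H)) (v : H) : Set (H →L[ℂ] H) :=
  {a | (∀ x ∈ beableSpan R v, a x ∈ beableSpan R v) ∧
    (∀ x ∈ beableSpan R v, ContinuousLinearMap.adjoint a x ∈ beableSpan R v) ∧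
    ∃ T ∈ Set.centralizer (Set.centralizer R), ∀ x ∈ beableSpan R v, a x = T x}

section BeableSpan

open scoped InnerProductSpace

variable {H : Type*} [NormedAddCommGroup H] [InnerProductSpace ℂ H]

theorem beableSpan_coe (R : Set (H →L[ℂ] H)) (v : H) :
    (beableSpan R v : Set H) =
      closure ((fun T : H →L[ℂ] H => T v) '' Set.centralizer (Set.centralizer R)) := by
  rw [beableSpan, Submodule.topologicalClosure_coe]
  congr 1
  refine Set.Subset.antisymm ?_ Submodule.subset_span
  intro x hx
  refine Submodule.span_induction (fun _ h => h) ⟨0, Set.zero_mem_centralizer, by simp⟩ ?_ ?_ hx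
  · rintro _ _ - - ⟨X, hX, rfl⟩ ⟨Y, hY, rfl⟩
    exact ⟨X + Y, Set.add_mem_centralizer hX hY, by simp⟩
  · rintro c _ - ⟨X, hX, rfl⟩
    exact ⟨c • X, fun m hm => by simp [hX m hm], by simp⟩

theorem apply_mem_beableSpan {R : Set (H →L[ℂ] H)} {X : H →L[ℂ] H}
    (hX : X ∈ Set.centralizer (Set.centralizer R)) (v : H) : X v ∈ beableSpan R v :=
  Submodule.le_topologicalClosure _ (Submodule.subset_span ⟨X, hX, rfl⟩)

theorem mem_beableSpan_self (R : Set (H →L[ℂ] H)) (v : H) : v ∈ beableSpan R v :=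
  apply_mem_beableSpan (X := 1) Set.one_mem_centralizer v

theorem isClosed_beableSpan (R : Set (H →L[ℂ] H)) (v : H) :
    IsClosed (beableSpan R v : Set H) :=
  Submodule.isClosed_topologicalClosure _

/-- A closed property of vectors holding on the orbit `R''v` holds on its closed span. -/
theorem beableSpan_induction {R : Set (H →L[ℂ] H)} {v : H} {p : H → Prop}
    (hp : IsClosed {x | p x}) (h : ∀ X ∈ Set.centralizer (Set.centralizer R), p (X v))
    {x : H} (hx : x ∈ beableSpan R v) : p x := by
  rw [← SetLike.mem_coe, beableSpan_coe] at hx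
  refine closure_minimal ?_ hp hx
  rintro _ ⟨X, hX, rfl⟩
  exact h X hX

theorem map_mem_beableSpan {R : Set (H →L[ℂ] H)} {v : H} {X : H →L[ℂ] H}
    (hX : X ∈ Set.centralizer (Set.centralizer R)) {x : H} (hx : x ∈ beableSpan R v) :
    X x ∈ beableSpan R v :=
  beableSpan_induction (p := fun x => X x ∈ beableSpan R v)
    ((isClosed_beableSpan R v).preimage X.continuous)
    (fun _ hY => apply_mem_beableSpan (Set.mul_mem_centralizer hX hY) v) hx

/-- An operator commuting with `R` and sending `v` into `[R''v]` leaves `[R''v]` invariant. -/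
theorem map_mem_beableSpan_of_apply_mem {R : Set (H →L[ℂ] H)} {v : H} {A : H →L[ℂ] H}
    (hA : A ∈ Set.centralizer R) (hAv : A v ∈ beableSpan R v) {x : H}
    (hx : x ∈ beableSpan R v) : A x ∈ beableSpan R v := by
  refine beableSpan_induction (p := fun x => A x ∈ beableSpan R v)
    ((isClosed_beableSpan R v).preimage A.continuous) (fun X hX => ?_) hx
  have h : A (X v) = X (A v) := congrArg (fun T : H →L[ℂ] H => T v) (hX A hA)
  exact h ▸ map_mem_beableSpan hX hAv

variable [CompleteSpace H]

theorem commute_starProjection {K : Submodule ℂ H} [K.HasOrthogonalProjection] {X : H →L[ℂ] H}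
    (hX : ∀ x ∈ K, X x ∈ K) (hX' : ∀ x ∈ K, star X x ∈ K) : Commute X K.starProjection := by
  ext x
  symm
  refine Submodule.eq_starProjection_of_mem_of_inner_eq_zero (hX _ (by simp)) fun w hw => ?_
  rw [ContinuousLinearMap.coe_coe, mul_apply_eq_comp, ← map_sub, ← ContinuousLinearMap.adjoint_inner_right]
  exact Submodule.starProjection_inner_eq_zero x _ (hX' w hw)

instance (R : Set (H →L[ℂ] H)) (v : H) : CompleteSpace (beableSpan R v) :=
  (isClosed_beableSpan R v).completeSpace_coe

theorem starProjection_beableSpan_mem_centralizer {R : Set (H →L[ℂ] H)}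
    (hR : ∀ a ∈ R, star a ∈ R) (v : H) :
    (beableSpan R v).starProjection ∈
      Set.centralizer (Set.centralizer (Set.centralizer R)) := fun _ hX =>
  commute_starProjection (fun _ => map_mem_beableSpan hX)
    (fun _ => map_mem_beableSpan (Set.star_mem_centralizer'
      (fun _ ha => Set.star_mem_centralizer' hR ha) hX))

/-- On the cyclic space `[R''v]` of an abelian `R''`, commutators of operators in the commutant
have vanishing compression. -/
theorem inner_commutator_apply_eq_zero {R : Set (H →L[ℂ] H)} (hR : ∀ a ∈ R, star a ∈ R)
    (hcomm : Set.centralizer (Set.centralizer R) ⊆ Set.centralizer R) {v : H}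
    {A E : H →L[ℂ] H} (hA : IsSelfAdjoint A) (hAR : A ∈ Set.centralizer R)
    (hAv : A v ∈ beableSpan R v) (hE : E ∈ Set.centralizer R) {y : H}
    (hy : y ∈ beableSpan R v) : ⟪(A * E - E * A) v, y⟫_ℂ = 0 := by
  refine beableSpan_induction (p := fun y => ⟪(A * E - E * A) v, y⟫_ℂ = 0)
    (isClosed_eq (by fun_prop) (by fun_prop)) (fun Y hY => ?_) hy
  -- approximate `A v` by `X v` with `X ∈ R''`; then `X - A` is normal
  have key : ∀ X ∈ Set.centralizer (Set.centralizer R), ‖⟪(A * E - E * A) v, Y v⟫_ℂ‖ ≤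
      (‖E v‖ * ‖Y‖ + ‖E‖ * ‖Y v‖) * ‖A v - X v‖ := by
    intro X hX
    have hXs : star X ∈ Set.centralizer (Set.centralizer R) :=
      Set.star_mem_centralizer' (fun _ ha => Set.star_mem_centralizer' hR ha) hX
    have hAX : A * X = X * A := hX A hAR
    have hAXs : A * star X = star X * A := hXs A hAR
    have hXX : star X * X = X * star X := (hXs X (hcomm hX)).symm
    have hn : IsStarNormal (A - X) := by
      constructor
      rw [commute_iff_eq, star_sub, hA.star_eq]
      simp only [sub_mul, mul_sub, hXX, hAX, hAXs]
      abel
    have hnorm := ContinuousLinearMap.isStarNormal_iff_norm_eq_adjoint.mp hn v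
    have hEX : E * X = X * E := hX E hE
    have hdec : A * E - E * A = (A - X) * E - E * (A - X) := by
      simp only [sub_mul, mul_sub, hEX]; abel
    have hYc : star (A - X) * Y = Y * star (A - X) := by
      have h1 : A * Y = Y * A := hY A hAR
      have h2 : star X * Y = Y * star X := hY _ (hcomm hXs)
      simp only [star_sub, hA.star_eq, sub_mul, mul_sub, h1, h2]
    have h1 : ⟪((A - X) * E) v, Y v⟫_ℂ = ⟪E v, Y (star (A - X) v)⟫_ℂ := by
      rw [← mul_apply_eq_comp Y, ← hYc]
      exact (ContinuousLinearMap.adjoint_inner_right (A - X) (E v) (Y v)).symm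
    rw [hdec, sub_apply, inner_sub_left, h1]
    have hb1 : ‖⟪E v, Y (star (A - X) v)⟫_ℂ‖ ≤ ‖E v‖ * (‖Y‖ * ‖(A - X) v‖) := by
      rw [hnorm]
      exact (norm_inner_le_norm _ _).trans (by gcongr; exact Y.le_opNorm _)
    have hb2 : ‖⟪(E * (A - X)) v, Y v⟫_ℂ‖ ≤ ‖E‖ * ‖(A - X) v‖ * ‖Y v‖ :=
      (norm_inner_le_norm _ _).trans (by gcongr; exact E.le_opNorm _)
    have := norm_sub_le ⟪E v, Y (star (A - X) v)⟫_ℂ ⟪(E * (A - X)) v, Y v⟫_ℂ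
    rw [← sub_apply]
    linarith
  have hlim := beableSpan_induction
    (p := fun x => ‖⟪(A * E - E * A) v, Y v⟫_ℂ‖ ≤
      (‖E v‖ * ‖Y‖ + ‖E‖ * ‖Y v‖) * ‖A v - x‖)
    (isClosed_le (by fun_prop) (by fun_prop)) key hAv
  simpa using hlim

/-- `Y v ↦ Y A v` is bounded by `‖A‖` on the orbit of `v` under `R'`. -/
theorem norm_apply_apply_le {R : Set (H →L[ℂ] H)} (hR : ∀ a ∈ R, star a ∈ R)
    (hcomm : Set.centralizer (Set.centralizer R) ⊆ Set.centralizer R) {v : H}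
    {A Y : H →L[ℂ] H} (hA : IsSelfAdjoint A) (hAR : A ∈ Set.centralizer R)
    (hAv : A v ∈ beableSpan R v) (hY : Y ∈ Set.centralizer R) :
    ‖Y (A v)‖ ≤ ‖A‖ * ‖Y v‖ := by
  obtain ⟨P, hP⟩ : ∃ P, P = (beableSpan R v).starProjection := ⟨_, rfl⟩
  have hAS : ∀ x ∈ beableSpan R v, A x ∈ beableSpan R v :=
    fun _ => map_mem_beableSpan_of_apply_mem hAR hAv
  have hPR : P ∈ Set.centralizer R := by
    simpa [hP] using starProjection_beableSpan_mem_centralizer hR v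
  have hPx : ∀ x ∈ beableSpan R v, P x = x :=
    fun x hx => hP ▸ Submodule.starProjection_eq_self_iff.mpr hx
  have hPmem : ∀ x, P x ∈ beableSpan R v := fun x => hP ▸ Submodule.starProjection_apply_mem _ x
  have hPs : star P = P := hP ▸ (isSelfAdjoint_starProjection _).star_eq
  have hAP : A * P = P * A := hP ▸ commute_starProjection hAS (by rwa [hA.star_eq])
  obtain ⟨C, hC⟩ : ∃ C, C = star (Y * P) * (Y * P) := ⟨_, rfl⟩
  have hCR : C ∈ Set.centralizer R := by
    rw [hC]
    have : Y * P ∈ Set.centralizer R := Set.mul_mem_centralizer hY hPR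
    exact Set.mul_mem_centralizer (Set.star_mem_centralizer' hR this) this
  have hCmem : ∀ x, C x ∈ beableSpan R v := fun x => by
    rw [hC, star_mul, hPs, mul_assoc]
    exact hPmem _
  have hzero : ∀ x ∈ beableSpan R v, (A * C - C * A) x = 0 := by
    intro x hx
    refine beableSpan_induction (p := fun x => (A * C - C * A) x = 0)
      (isClosed_eq (by fun_prop) (by fun_prop)) (fun X hX => ?_) hx
    have hX' : (A * C - C * A) * X = X * (A * C - C * A) :=
      hX _ ((Subring.centralizer R).sub_mem (Set.mul_mem_centralizer hAR hCR)
        (Set.mul_mem_centralizer hCR hAR))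
    have hv0 : (A * C - C * A) v = 0 :=
      inner_self_eq_zero.mp (inner_commutator_apply_eq_zero hR hcomm hA hAR hAv hCR
        (sub_mem (hAS _ (hCmem v)) (hCmem (A v))))
    rw [← mul_apply_eq_comp, hX', mul_apply_eq_comp, hv0, map_zero]
  have hPP : P * P = P := by
    ext x
    exact hPx _ (hPmem x)
  have hCP : C * P = C := by rw [hC, mul_assoc, mul_assoc, hPP]
  have hAC : Commute A C := by
    rw [commute_iff_eq, ← sub_eq_zero]
    have : A * C - C * A = (A * C - C * A) * P := by
      rw [sub_mul, mul_assoc, hCP, mul_assoc, hAP, ← mul_assoc C P A, hCP]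
    rw [this]
    ext x
    exact hzero _ (hPmem x)
  have hD : 0 ≤ algebraMap ℝ (H →L[ℂ] H) (‖A‖ ^ 2) - star A * A :=
    sub_nonneg.mpr CStarAlgebra.star_mul_le_algebraMap_norm_sq
  have hC0 : 0 ≤ C := hC ▸ star_mul_self_nonneg (Y * P)
  have hDC : Commute (algebraMap ℝ (H →L[ℂ] H) (‖A‖ ^ 2) - star A * A) C := by
    rw [hA.star_eq]
    exact (Algebra.commute_algebraMap_left _ _).sub_left (hAC.mul_left hAC)
  have hpos := Commute.mul_nonneg hD hC0 hDC
  have h := ((ContinuousLinearMap.nonneg_iff_isPositive _).mp hpos).re_inner_nonneg_left v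
  have hCin : ∀ x ∈ beableSpan R v, ⟪C x, x⟫_ℂ = (‖Y x‖ : ℂ) ^ 2 := by
    intro x hx
    have : ⟪C x, x⟫_ℂ = ⟪(Y * P) x, (Y * P) x⟫_ℂ := by
      rw [hC]
      exact ContinuousLinearMap.adjoint_inner_left (Y * P) x ((Y * P) x)
    rw [this, inner_self_eq_norm_sq_to_K]
    simp [hPx x hx]
  have h2 : ⟪(A * A * C) v, v⟫_ℂ = (‖Y (A v)‖ : ℂ) ^ 2 := by
    rw [← hCin _ hAv, mul_assoc, hAC.eq]
    have := ContinuousLinearMap.adjoint_inner_right A ((C * A) v) v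
    rw [← ContinuousLinearMap.star_eq_adjoint, hA.star_eq] at this
    exact this.symm
  rw [hA.star_eq, sub_mul, sub_apply, inner_sub_left, h2,
    Algebra.algebraMap_eq_smul_one, smul_mul_assoc, one_mul, smul_apply,
    ← Complex.coe_smul, inner_smul_left, hCin v (mem_beableSpan_self R v)] at h
  have h3 : ‖Y (A v)‖ ^ 2 ≤ (‖A‖ * ‖Y v‖) ^ 2 := by
    rw [mul_pow, ← sub_nonneg]
    convert h using 1
    simp [← Complex.ofReal_pow, ← Complex.ofReal_mul, ← Complex.ofReal_sub]
  exact (pow_le_pow_iff_left₀ (norm_nonneg _) (by positivity) two_ne_zero).mp h3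

/-- Maximal abelianness of `R''` on `[R''v]`: a self-adjoint `A ∈ R'` with `A v ∈ [R''v]` agrees at `v`
with some `T ∈ R''`. -/
theorem exists_mem_bicommutant_apply_eq {R : Set (H →L[ℂ] H)} (hR : ∀ a ∈ R, star a ∈ R)
    (hcomm : Set.centralizer (Set.centralizer R) ⊆ Set.centralizer R) {v : H}
    {A : H →L[ℂ] H} (hA : IsSelfAdjoint A) (hAR : A ∈ Set.centralizer R)
    (hAv : A v ∈ beableSpan R v) :
    ∃ T ∈ Set.centralizer (Set.centralizer R), T v = A v := by
  let K := beableSpan (Set.centralizer R) v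
  let N := Subalgebra.toSubmodule (Subalgebra.centralizer ℂ R)
  have hN : ∀ Y, Y ∈ N ↔ Y ∈ Set.centralizer R := fun _ => Iff.rfl
  let ev : H → N →ₗ[ℂ] H := fun x =>
    (ContinuousLinearMap.apply ℂ H x).toLinearMap ∘ₗ N.subtype
  have hmem : ∀ Y : N, ev v Y ∈ K := fun Y =>
    apply_mem_beableSpan (by simpa using (hN _).mp Y.2) v
  let e : N →ₗ[ℂ] K := (ev v).codRestrict K hmem
  have hdense : DenseRange e := by
    intro k
    rw [closure_subtype]
    refine beableSpan_induction (R := Set.centralizer R) (v := v) isClosed_closure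
      (fun X hX => subset_closure ?_) k.2
    rw [Set.centralizer_centralizer_centralizer] at hX
    exact ⟨e ⟨X, hX⟩, ⟨⟨X, hX⟩, rfl⟩, rfl⟩
  have hbound : ∀ Y : N, ‖ev (A v) Y‖ ≤ ‖A‖ * ‖e Y‖ := fun Y =>
    norm_apply_apply_le hR hcomm hA hAR hAv ((hN _).mp Y.2)
  let T : H →L[ℂ] H := ((ev (A v)).extendOfNorm e) ∘L K.orthogonalProjectionOnto
  have hT : ∀ Y ∈ Set.centralizer R, T (Y v) = Y (A v) := by
    intro Y hY
    have h1 : K.orthogonalProjectionOnto (Y v) = e ⟨Y, hY⟩ :=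
      Submodule.orthogonalProjectionOnto_mem_subspace_eq_self (e ⟨Y, hY⟩)
    change (ev (A v)).extendOfNorm e (K.orthogonalProjectionOnto (Y v)) = _
    rw [h1, LinearMap.extendOfNorm_eq hdense ⟨_, hbound⟩]
    rfl
  have hTP : ∀ x, T (K.starProjection x) = T x := by
    intro x
    change (ev (A v)).extendOfNorm e (K.orthogonalProjectionOnto (K.orthogonalProjectionOnto x : H)) = _
    rw [Submodule.orthogonalProjectionOnto_mem_subspace_eq_self]
    rfl
  refine ⟨T, fun Z hZ => ?_, by simpa using hT 1 Set.one_mem_centralizer⟩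
  have hK : ∀ x ∈ K, T (Z x) = Z (T x) := by
    intro x hx
    refine beableSpan_induction (R := Set.centralizer R) (v := v)
      (p := fun x => T (Z x) = Z (T x)) (isClosed_eq (by fun_prop) (by fun_prop))
      (fun X hX => ?_) hx
    rw [Set.centralizer_centralizer_centralizer] at hX
    rw [hT X hX]
    exact hT (Z * X) (Set.mul_mem_centralizer hZ hX)
  have hZK : Z * K.starProjection = K.starProjection * Z :=
    starProjection_beableSpan_mem_centralizer (fun _ ha => Set.star_mem_centralizer' hR ha) v Z
      (by simpa using hZ)
  ext x
  have hZx : K.starProjection (Z x) = Z (K.starProjection x) :=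
    congrArg (fun T : H →L[ℂ] H => T x) hZK.symm
  change Z (T x) = T (Z x)
  rw [← hTP (Z x), hZx, hK _ (Submodule.starProjection_apply_mem _ x), hTP]

end BeableSpan

/-- Let R be a commuting self-adjoint family in B(H), v a unit vector, S = [R''v].
If A is self-adjoint, commutes with every element of R, and Av ∈ S, then
A ∈ B(S^⊥) ⊕ R''P_S; if A does not leave S invariant, then A ∉ B(S^⊥) ⊕ R''P_S. -/
theorem stmt_18 {H : Type*} [NormedAddCommGroup H] [InnerProductSpace ℂ H] [CompleteSpace H]
    (R : Set (H →L[ℂ] H))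
    (hRsa : ∀ r ∈ R, IsSelfAdjoint r)
    (hRcomm : ∀ r ∈ R, ∀ s ∈ R, Commute r s)
    (v : H) (hv : ‖v‖ = 1)
    (A : H →L[ℂ] H) (hA : IsSelfAdjoint A) :
    ((A ∈ Set.centralizer R ∧ A v ∈ beableSpan R v) → A ∈ BRv R v) ∧
    ((¬ ∀ x ∈ beableSpan R v, A x ∈ beableSpan R v) → A ∉ BRv R v) := by
  refine ⟨fun ⟨hAR, hAv⟩ => ?_, fun h hmem => h hmem.1⟩
  have hR : ∀ a ∈ R, star a ∈ R := fun a ha => (hRsa a ha).star_eq.symm ▸ ha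
  have hcomm : Set.centralizer (Set.centralizer R) ⊆ Set.centralizer R :=
    Set.centralizer_subset fun r hr s hs => hRcomm s hs r hr
  have hAS : ∀ x ∈ beableSpan R v, A x ∈ beableSpan R v :=
    fun _ => map_mem_beableSpan_of_apply_mem hAR hAv
  obtain ⟨T, hT, hTv⟩ := exists_mem_bicommutant_apply_eq hR hcomm hA hAR hAv
  refine ⟨hAS, ?_, T, hT, fun x hx => ?_⟩
  · rwa [← ContinuousLinearMap.star_eq_adjoint, hA.star_eq]
  · refine beableSpan_induction (p := fun x => A x = T x)
      (isClosed_eq (by fun_prop) (by fun_prop)) (fun X hX => ?_) hx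
    have h1 : A (X v) = X (A v) := congrArg (fun T : H →L[ℂ] H => T v) (hX A hAR)
    have h2 : T (X v) = X (T v) := congrArg (fun T : H →L[ℂ] H => T v) (hX T (hcomm hT))
    rw [h1, h2, hTv]
end
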